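/- For every 3iet word v (i.e. v = u_{ε,ℓ,x0} for some irrational ε ∈ (0,1), ℓ with max{ε,1−ε} < ℓ < 1, x0 ∈ [0,ℓ)) and every k ∈ ℕ, the infinite word Φ_k(v) is a coding of rotation: there exist an irrational α ∈ (0,1), β ∈ (0,1), and an initial point x ∈ [0,1) such that for all n, the n-th letter of Φ_k(v) is 0 if {x + nα} ∈ [0,β) and 1 if {x + nα} ∈ [β,1). -/

import Mathlib

/-!
Put `a = 1 - ε` and `L = 1 + k * a`. The word `Φ_k(v)` codes the rotation `y ↦ y + a` on the circle
`ℝ / Lℤ` with respect to the partition `[0, ℓ) ∪ [ℓ, L)`; dividing by `L` gives `α = a / L`,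
`β = ℓ / L` and `x = x0 / L`.

The reason is that `T_{ε,ℓ}` is the map induced by this rotation on `[0, ℓ)`:
* a point `y` of `I_A` returns to `[0, ℓ)` at once, at `y + a`;
* a point `y` of `I_B` spends the times `1, …, k + 1` in `[ℓ, L)` and returns at time `k + 2`, at
  `y + (k + 2) * a - L = y + 1 - 2 * ε`;
* a point `y` of `I_C` spends the times `1, …, k` in `[ℓ, L)` and returns at time `k + 1`, at
  `y + (k + 1) * a - L = y - ε`.

The itineraries up to the return time are exactly the words `0`, `01^{k+1}`, `01^k`, that is, the
images of `A`, `B`, `C` under `Φ_k` (`Phi_block`). Concatenating the blocks along the orbit of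
`x0` gives the claim (`blocks_eq`).
-/

/-- The alphabet of 3iet words. -/
inductive L3 | A | B | C
deriving DecidableEq, Inhabited

/-- The three-interval exchange transformation `T_{ε,ℓ}`. -/
noncomputable def T3 (ε ℓ : ℝ) (x : ℝ) : ℝ :=
  if x < ℓ - 1 + ε then x + 1 - ε
  else if x < ε then x + 1 - 2*ε
  else x - ε

/-- The 3iet word `u_{ε,ℓ,x0}` coding the orbit of `x0` under `T_{ε,ℓ}`. -/
noncomputable def u3 (ε ℓ x0 : ℝ) (n : ℕ) : L3 :=
  if (T3 ε ℓ)^[n] x0 < ℓ - 1 + ε then L3.A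
  else if (T3 ε ℓ)^[n] x0 < ε then L3.B
  else L3.C

/-- The two-interval exchange transformation `T_ε`. -/
noncomputable def T2 (ε : ℝ) (x : ℝ) : ℝ := if x < ε then x + 1 - ε else x - ε

/-- The Sturmian word `u_{ε,x0}` of slope `ε` coding the orbit of `x0` under `T_ε`
(letter `0` is `false`, letter `1` is `true`). -/
noncomputable def u2 (ε x0 : ℝ) (n : ℕ) : Bool := if (T2 ε)^[n] x0 < ε then false else true

/-- `w` is a factor of the infinite word `u`. -/
def IsFactor {α : Type*} (w : List α) (u : ℕ → α) : Prop :=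
  ∃ i : ℕ, w = (List.range w.length).map fun j => u (i + j)

/-- The prefix of length `m` of the periodic infinite word `www⋯`;
for `|w| ≤ m` this is the fractional power `w^{m/|w|}`. -/
def powPrefix {α : Type*} [Inhabited α] (w : List α) (m : ℕ) : List α :=
  (List.range m).map fun j => w.getD (j % w.length) default

/-- The index of the factor `w` in the infinite word `u`:
`sup {r ∈ ℚ, r ≥ 1, r|w| ∈ ℕ | w^r is a factor of u}`, as an element of `ℝ ∪ {+∞}`. -/
noncomputable def factorIndex {α : Type*} [Inhabited α] (u : ℕ → α) (w : List α) : EReal :=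
  sSup {x : EReal | ∃ m : ℕ, w.length ≤ m ∧ IsFactor (powPrefix w m) u ∧
    x = (((m : ℝ) / (w.length : ℝ) : ℝ) : EReal)}

/-- The index of the infinite word `u`: `sup {ind(w) | w a nonempty factor of u}`. -/
noncomputable def wordIndex {α : Type*} [Inhabited α] (u : ℕ → α) : EReal :=
  sSup {x : EReal | ∃ w : List α, w ≠ [] ∧ IsFactor w u ∧ x = factorIndex u w}

/-- The Gauss map `x ↦ {1/x}`. -/
noncomputable def gaussMap (x : ℝ) : ℝ := Int.fract x⁻¹

/-- `cfa ε n` is the partial quotient `a_{n+1}` of the continued fraction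
expansion `ε = [0; a₁, a₂, a₃, …]` of the irrational `ε ∈ (0,1)`. -/
noncomputable def cfa (ε : ℝ) (n : ℕ) : ℕ := ⌊(gaussMap^[n] ε)⁻¹⌋₊

/-- The morphism `σ01 : A ↦ 0, B ↦ 01, C ↦ 1`. -/
def sigma01 : L3 → List Bool
  | L3.A => [false]
  | L3.B => [false, true]
  | L3.C => [true]

/-- The morphism `σ10 : A ↦ 0, B ↦ 10, C ↦ 1`. -/
def sigma10 : L3 → List Bool
  | L3.A => [false]
  | L3.B => [true, false]
  | L3.C => [true]

/-- The image `φ(u₀)φ(u₁)φ(u₂)⋯` of an infinite word `u` under a (nonerasing) morphism `φ`. -/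
def morphWord (φ : L3 → List Bool) (u : ℕ → L3) (m : ℕ) : Bool :=
  ((List.range (m+1)).flatMap fun k => φ (u k)).getD m false

/-- `u` is a uniformly recurrent infinite word: every factor occurs infinitely often
with bounded gaps (every window of some length `R` contains an occurrence). -/
def UniformlyRecurrent {α : Type*} (u : ℕ → α) : Prop :=
  ∀ w : List α, IsFactor w u → ∃ R : ℕ, ∀ i : ℕ, ∃ j : ℕ, i ≤ j ∧ j < i + R ∧
    w = (List.range w.length).map fun t => u (j + t)

/-- `u` is eventually periodic. -/
def EventuallyPeriodic {α : Type*} (u : ℕ → α) : Prop :=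
  ∃ N p : ℕ, 0 < p ∧ ∀ n : ℕ, N ≤ n → u (n + p) = u n

/-- The standard words of `ε = [0; a₁, a₂, …]`, with the index shifted by one:
`sw ε 0 = s₋₁ = 1`, `sw ε 1 = s₀ = 0`, `sw ε 2 = s₁ = s₀^{a₁-1} s₋₁`, and
`sw ε (n+3) = s_{n+2} = s_{n+1}^{a_{n+2}} s_n`. -/
noncomputable def sw (ε : ℝ) : ℕ → List Bool
  | 0 => [true]
  | 1 => [false]
  | 2 => (List.replicate (cfa ε 0 - 1) ([false] : List Bool)).flatten ++ [true]
  | (n+3) => (List.replicate (cfa ε (n+1)) (sw ε (n+2))).flatten ++ sw ε (n+1)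

/-- Denominators of the convergents of `ε`, shifted by one: `qq ε 0 = q₋₁ = 0`,
`qq ε 1 = q₀ = 1`, and `qq ε (n+2) = q_{n+1} = a_{n+1} q_n + q_{n-1}`. -/
noncomputable def qq (ε : ℝ) : ℕ → ℕ
  | 0 => 0
  | 1 => 1
  | (n+2) => cfa ε n * qq ε (n+1) + qq ε n

/-- `u` is a 3iet word. -/
def Is3ietWord (u : ℕ → L3) : Prop :=
  ∃ ε ℓ x0 : ℝ, Irrational ε ∧ 0 < ε ∧ ε < 1 ∧ max ε (1 - ε) < ℓ ∧ ℓ < 1 ∧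
    x0 ∈ Set.Ico 0 ℓ ∧ u = u3 ε ℓ x0

/-- `v` is a Sturmian word. -/
def IsSturmianWord (v : ℕ → Bool) : Prop :=
  ∃ ε x0 : ℝ, Irrational ε ∧ 0 < ε ∧ ε < 1 ∧ x0 ∈ Set.Ico (0:ℝ) 1 ∧ v = u2 ε x0

/-- The infinite binary word `v1` is amicable with `v2` (`v1 ∝ v2`). -/
def AmicableInf (v1 v2 : ℕ → Bool) : Prop :=
  ∃ w : ℕ → L3, v1 = morphWord sigma01 w ∧ v2 = morphWord sigma10 w

/-- The morphism `Φ_k : A ↦ 0, B ↦ 01^{k+1}, C ↦ 01^k`. -/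
def Phi (k : ℕ) : L3 → List Bool
  | L3.A => [false]
  | L3.B => false :: List.replicate (k+1) true
  | L3.C => false :: List.replicate k true

/-- The infinite word `B₀B₁B₂⋯` obtained by concatenating the sequence of
(nonempty) blocks `B`. -/
def concatOfBlocks (B : ℕ → List Bool) (m : ℕ) : Bool :=
  ((List.range (m+1)).flatMap B).getD m false

/-- The letter of `{A, B, C}` whose interval contains `y`. -/
noncomputable def letter3 (ε ℓ y : ℝ) : L3 :=
  if y < ℓ - 1 + ε then L3.A else if y < ε then L3.B else L3.C

/-- The letter read at the point `y` of the circle `ℝ / Lℤ`, rescaled to length `1`: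
`false` on `[0, ℓ)` and `true` on `[ℓ, L)`. -/
noncomputable def circleLetter (ℓ L y : ℝ) : Bool :=
  if Int.fract (y / L) < ℓ / L then false else true

lemma circleLetter_false {ℓ L y : ℝ} (hL : 0 < L) (hlL : ℓ < L) (h0 : 0 ≤ y) (hy : y < ℓ) :
    circleLetter ℓ L y = false := by
  have h : Int.fract (y / L) = y / L :=
    Int.fract_eq_self.2 ⟨by positivity, by rw [div_lt_one hL]; linarith⟩
  have h2 : y / L < ℓ / L := by gcongr
  simp [circleLetter, h, h2]

lemma circleLetter_true {ℓ L y : ℝ} (hL : 0 < L) (h0 : 0 ≤ y) (hy : ℓ ≤ y) (hyL : y < L) :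
    circleLetter ℓ L y = true := by
  have h : Int.fract (y / L) = y / L :=
    Int.fract_eq_self.2 ⟨by positivity, by rw [div_lt_one hL]; linarith⟩
  have h2 : ¬ y / L < ℓ / L := by
    rw [not_lt]; gcongr
  simp [circleLetter, h, h2]

lemma circleLetter_add_int {ℓ L y : ℝ} (hL : 0 < L) (z : ℤ) :
    circleLetter ℓ L (y + z * L) = circleLetter ℓ L y := by
  have h : (y + z * L) / L = y / L + z := by field_simp
  rw [circleLetter, circleLetter, h, Int.fract_add_intCast]

lemma cons_replicate_eq_map (c : ℕ → Bool) (m : ℕ) (hc0 : c 0 = false)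
    (hc : ∀ j, j < m → c (j + 1) = true) :
    false :: List.replicate m true = (List.range (m + 1)).map c := by
  rw [List.range_succ_eq_map, List.map_cons, hc0, List.map_map]
  congr 1
  symm
  rw [List.eq_replicate_iff]
  refine ⟨by simp, ?_⟩
  intro b hb
  simp only [List.mem_map, List.mem_range, Function.comp] at hb
  obtain ⟨j, hj, rfl⟩ := hb
  exact hc j hj

/-- The first return of the rotation to `[0, ℓ)`: from `y`, the rotation reads the block
`Φ_k` of the letter of `y`, and then arrives at `T_{ε,ℓ} y` modulo `L`. -/
lemma Phi_block {ε ℓ : ℝ} (hlε : ε < ℓ) (hl : 1 - ε < ℓ) (hl1 : ℓ < 1)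
    (k : ℕ) {y : ℝ} (hy0 : 0 ≤ y) (hy : y < ℓ) :
    0 < (Phi k (letter3 ε ℓ y)).length ∧
    Phi k (letter3 ε ℓ y) = (List.range (Phi k (letter3 ε ℓ y)).length).map
      (fun j : ℕ => circleLetter ℓ (1 + k * (1 - ε)) (y + j * (1 - ε))) ∧
    0 ≤ T3 ε ℓ y ∧ T3 ε ℓ y < ℓ ∧
    ∃ z : ℤ, y + (Phi k (letter3 ε ℓ y)).length * (1 - ε)
      = T3 ε ℓ y + z * (1 + k * (1 - ε)) := by
  have hka : (0 : ℝ) ≤ k * (1 - ε) := mul_nonneg (Nat.cast_nonneg k) (by linarith)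
  have hL : 0 < 1 + k * (1 - ε) := by linarith
  have hlL : ℓ < 1 + k * (1 - ε) := by linarith
  have hstart : circleLetter ℓ (1 + k * (1 - ε)) (y + (0 : ℕ) * (1 - ε)) = false :=
    circleLetter_false hL hlL (by simpa using hy0) (by simpa using hy)
  by_cases hA : y < ℓ - 1 + ε
  · have hlet : letter3 ε ℓ y = L3.A := by simp [letter3, hA]
    have hT : T3 ε ℓ y = y + 1 - ε := by simp [T3, hA]
    rw [hlet, hT]
    refine ⟨by simp [Phi], ?_, by linarith, by linarith, 0, ?_⟩
    · simpa [Phi] using hstart.symm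
    · simp [Phi]; ring
  by_cases hB : y < ε
  · have hlet : letter3 ε ℓ y = L3.B := by simp [letter3, hA, hB]
    have hT : T3 ε ℓ y = y + 1 - 2 * ε := by simp [T3, hA, hB]
    have hlen : (Phi k L3.B).length = k + 1 + 1 := by simp [Phi]
    rw [hlet, hT, hlen]
    refine ⟨by omega, ?_, by linarith, by linarith, 1, by push_cast; ring⟩
    refine cons_replicate_eq_map
      (fun j : ℕ => circleLetter ℓ (1 + k * (1 - ε)) (y + j * (1 - ε))) (k + 1) hstart ?_
    intro j hj
    have hj' : (j : ℝ) ≤ k := by exact_mod_cast Nat.lt_succ_iff.1 hj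
    have hja : (j : ℝ) * (1 - ε) ≤ k * (1 - ε) := mul_le_mul_of_nonneg_right hj' (by linarith)
    have hj0 : (0 : ℝ) ≤ j * (1 - ε) := mul_nonneg (Nat.cast_nonneg j) (by linarith)
    refine circleLetter_true hL ?_ ?_ ?_ <;> push_cast <;> linarith
  · have hlet : letter3 ε ℓ y = L3.C := by simp [letter3, hA, hB]
    have hT : T3 ε ℓ y = y - ε := by simp [T3, hA, hB]
    have hlen : (Phi k L3.C).length = k + 1 := by simp [Phi]
    rw [hlet, hT, hlen]
    refine ⟨by omega, ?_, by linarith, by linarith, 1, by push_cast; ring⟩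
    refine cons_replicate_eq_map
      (fun j : ℕ => circleLetter ℓ (1 + k * (1 - ε)) (y + j * (1 - ε))) k hstart ?_
    intro j hj
    have hj' : ((j : ℝ) + 1) ≤ k := by exact_mod_cast hj
    have hja : ((j : ℝ) + 1) * (1 - ε) ≤ k * (1 - ε) :=
      mul_le_mul_of_nonneg_right hj' (by linarith)
    have hj0 : (0 : ℝ) ≤ j * (1 - ε) := mul_nonneg (Nat.cast_nonneg j) (by linarith)
    refine circleLetter_true hL ?_ ?_ ?_ <;> push_cast <;> linarith

/-- The image under `Φ_k` of the first `n` letters of the 3iet word is a prefix of the coding of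
the orbit of `x0` under the rotation, and its length is a time at which this orbit is at
`T_{ε,ℓ}^n x0` modulo `L`. -/
lemma blocks_eq {ε ℓ x0 : ℝ} (hlε : ε < ℓ) (hl : 1 - ε < ℓ)
    (hl1 : ℓ < 1) (hx0 : 0 ≤ x0) (hx0l : x0 < ℓ) (k n : ℕ) :
    n ≤ ((List.range n).flatMap fun i => Phi k (u3 ε ℓ x0 i)).length ∧
    ((List.range n).flatMap fun i => Phi k (u3 ε ℓ x0 i)) =
      (List.range ((List.range n).flatMap fun i => Phi k (u3 ε ℓ x0 i)).length).map
        (fun j : ℕ => circleLetter ℓ (1 + k * (1 - ε)) (x0 + j * (1 - ε))) ∧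
    0 ≤ (T3 ε ℓ)^[n] x0 ∧ (T3 ε ℓ)^[n] x0 < ℓ ∧
    ∃ z : ℤ, x0 + ((List.range n).flatMap fun i => Phi k (u3 ε ℓ x0 i)).length * (1 - ε)
      = (T3 ε ℓ)^[n] x0 + z * (1 + k * (1 - ε)) := by
  have hka : (0 : ℝ) ≤ k * (1 - ε) := mul_nonneg (Nat.cast_nonneg k) (by linarith)
  have hL : 0 < 1 + k * (1 - ε) := by linarith
  induction n with
  | zero => exact ⟨by simp, by simp, by simpa using hx0, by simpa using hx0l, 0, by simp⟩
  | succ n ih =>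
    obtain ⟨hlen, heq, hy0, hy, z, hz⟩ := ih
    rw [Function.iterate_succ_apply', List.range_succ, List.flatMap_append,
      List.flatMap_singleton, List.length_append]
    have hu : u3 ε ℓ x0 n = letter3 ε ℓ ((T3 ε ℓ)^[n] x0) := rfl
    rw [hu]
    obtain ⟨hpos, hblock, hT0, hT, w, hw⟩ := Phi_block hlε hl hl1 k hy0 hy
    refine ⟨by omega, ?_, hT0, hT, z + w, ?_⟩
    · rw [List.range_add, List.map_append, ← heq, List.map_map]
      congr 1
      conv_lhs => rw [hblock]
      refine List.map_congr_left fun j _ => ?_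
      -- With `p` the image of the first `n` letters, the points reached at time `|p| + j` from `x0`
      -- and at time `j` from `T^n x0` differ by a multiple of `L`.
      rw [← circleLetter_add_int hL z]
      simp only [Function.comp]
      congr 1
      push_cast
      linarith
    · push_cast
      linarith

/-- for every 3iet word `v` and every `k ∈ ℕ`, the word `Φ_k(v)` is a
coding of rotation. -/
theorem Phi_of_threeIet_is_coding_of_rotation
    (ε ℓ x0 : ℝ) (hirr : Irrational ε) (h0 : 0 < ε) (h1 : ε < 1)
    (hl : max ε (1 - ε) < ℓ) (hl1 : ℓ < 1) (hx0 : x0 ∈ Set.Ico 0 ℓ) (k : ℕ) :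
    ∃ α β x : ℝ, Irrational α ∧ 0 < α ∧ α < 1 ∧ 0 < β ∧ β < 1 ∧ x ∈ Set.Ico (0:ℝ) 1 ∧
      ∀ n : ℕ, morphWord (Phi k) (u3 ε ℓ x0) n =
        (if Int.fract (x + n * α) < β then false else true) := by
  have hlε : ε < ℓ := lt_of_le_of_lt (le_max_left _ _) hl
  have hle : 1 - ε < ℓ := lt_of_le_of_lt (le_max_right _ _) hl
  obtain ⟨hx, hxl⟩ := hx0
  have ha : 0 < 1 - ε := by linarith
  have hka : (0 : ℝ) ≤ k * (1 - ε) := mul_nonneg (Nat.cast_nonneg k) ha.le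
  have hL : 0 < 1 + k * (1 - ε) := by linarith
  refine ⟨(1 - ε) / (1 + k * (1 - ε)), ℓ / (1 + k * (1 - ε)), x0 / (1 + k * (1 - ε)), ?_,
    by positivity, ?_, div_pos (by linarith) hL, ?_, ⟨by positivity, ?_⟩, ?_⟩
  · -- If `q = a / (1 + k * a)` is rational, then so is `a = q / (1 - k * q)`.
    rintro ⟨q, hq⟩
    rw [eq_div_iff hL.ne'] at hq
    have hne : (1 : ℝ) - k * q ≠ 0 := by
      intro h
      have h2 : (q : ℝ) = 0 := by linear_combination hq + (1 - ε) * h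
      rw [h2] at h
      simp at h
    refine hirr ⟨1 - q / (1 - k * q), ?_⟩
    push_cast
    have h3 : (q : ℝ) / (1 - k * q) = 1 - ε := by
      rw [div_eq_iff hne]
      linear_combination hq
    rw [h3]
    ring
  · rw [div_lt_one hL]; linarith
  · rw [div_lt_one hL]; linarith
  · rw [div_lt_one hL]; linarith
  · intro n
    obtain ⟨hlen, heq, -⟩ := blocks_eq hlε hle hl1 hx hxl k (n + 1)
    rw [morphWord, heq, List.getD_eq_getElem _ _ (by simpa using hlen)]
    rw [List.getElem_map, List.getElem_range, circleLetter]
    have h : (x0 + n * (1 - ε)) / (1 + k * (1 - ε))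
        = x0 / (1 + k * (1 - ε)) + n * ((1 - ε) / (1 + k * (1 - ε))) := by ring
    rw [h]
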